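/- Algorithm Revoke-Proportional with parameter λ > 1 is 3λ/(λ−1)-consistent for interval selection with proportional weights: for every real λ > 1, every instance, and every maximum-weight feasible set OPT, if every prediction is accurate with respect to OPT (Prd(I)=1 ⟺ I∈OPT for all intervals I of the instance), then the solution produced by Revoke-Proportional satisfies OPT ≤ (3λ/(λ−1))·ALG. -/

import Mathlib

attribute [local instance] Classical.propDecidable

noncomputable section

/-- An interval `I = (s, f)` with `s < f`, occupying `[s, f)`. -/
structure Ivl where
  s : ℝ
  f : ℝ
  lt : s < f

namespace Ivl

/-- The set of points occupied by an interval: the half-open set `[s, f)`. -/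
def occ (I : Ivl) : Set ℝ := Set.Ico I.s I.f

/-- The length of an interval, `f - s` (also its proportional weight). -/
def len (I : Ivl) : ℝ := I.f - I.s

end Ivl

/-- Two intervals conflict if their occupied sets intersect. -/
def Conflict (I J : Ivl) : Prop := (I.occ ∩ J.occ).Nonempty

/-- A set of intervals is feasible if its elements are pairwise disjoint. -/
def Feasible (S : Finset Ivl) : Prop :=
  ∀ I ∈ S, ∀ J ∈ S, I ≠ J → ¬ Conflict I J

/-- The total (proportional) weight of a finite set of intervals. -/
def wsum (S : Finset Ivl) : ℝ := ∑ I ∈ S, I.len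

/-- `opt` is a maximum-weight feasible subset of the instance's intervals,
for proportional weights. -/
def IsMaxWeightOpt (inst : List Ivl) (opt : Finset Ivl) : Prop :=
  (∀ I ∈ opt, I ∈ inst) ∧ Feasible opt ∧
    ∀ T : Finset Ivl, (∀ I ∈ T, I ∈ inst) → Feasible T → wsum T ≤ wsum opt

/-- One step of algorithm `Revoke-Proportional` with parameter `lam` upon
the arrival of `I`. -/
def revokePropStep (lam : ℝ) (Prd : Ivl → Bool) (S : Finset Ivl) (I : Ivl) :
    Finset Ivl :=
  let Is := S.filter (fun J => Conflict I J)
  let wc := ∑ J ∈ Is, J.len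
  if I.len ≥ lam * wc then  -- main replacement rule
    insert I (S \ Is)
  else if Prd I = true ∧ I.len ≥ wc ∧ ∀ J ∈ Is, Prd J = false then
    -- predictions rule
    insert I (S \ Is)
  else S

/-- The solution produced by algorithm `Revoke-Proportional` with
parameter `lam` on the instance `inst` with predictions `Prd`. -/
def revokeProp (lam : ℝ) (Prd : Ivl → Bool) (inst : List Ivl) : Finset Ivl :=
  inst.foldl (revokePropStep lam Prd) ∅

/-!
Every selected interval `J` carries a potential of at most `3λ/(λ-1)` times its length. If `J` is
predicted, it carries exactly that much. Otherwise it carries `3/(λ-1)` times its length, plus a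
charge `min |O| |J|` for every predicted interval `O` seen so far that conflicts with it. These
charges add up to at most `3|J|`: the predicted intervals are disjoint, and each one meeting `J`
occupies at least `min |O| |J|` of the window obtained by extending `J` by `|J|` on both sides.

The total potential always pays for the predicted intervals seen so far. No step decreases it: the
main rule replaces intervals of total length `w` by one of length at least `λw`, and
`3/(λ-1) · λw = 3λ/(λ-1) · w`; the predictions rule selects a predicted interval that is at least as
long as everything it revokes. The arrival of a predicted interval `I` raises the charges on the
conflicting intervals, of total length `w`, by at least `min |I| w`, and when `w ≤ |I|` the
replacement of these intervals by `I` gains the missing `|I| - w`.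
-/

open MeasureTheory

section Packing

lemma Ivl.len_pos (I : Ivl) : 0 < I.len :=
  sub_pos.2 I.lt

lemma Conflict.refl (I : Ivl) : Conflict I I :=
  ⟨I.s, ⟨le_rfl, I.lt⟩, ⟨le_rfl, I.lt⟩⟩

lemma Feasible.mono {S T : Finset Ivl} (hT : Feasible T) (hST : S ⊆ T) : Feasible S :=
  fun I hI J hJ => hT I (hST hI) J (hST hJ)

lemma Feasible.pairwiseDisjoint {S : Finset Ivl} (hS : Feasible S) :
    (S : Set Ivl).PairwiseDisjoint Ivl.occ := fun I hI J hJ hIJ =>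
  Set.disjoint_iff_inter_eq_empty.2 (Set.not_nonempty_iff_eq_empty.1 (hS I hI J hJ hIJ))

lemma Feasible.sum_measureReal_inter_le {S : Finset Ivl} (hS : Feasible S) {μ : Measure ℝ}
    {A : Set ℝ} (hA : MeasurableSet A) (hfin : μ A ≠ ⊤) :
    ∑ O ∈ S, μ.real (O.occ ∩ A) ≤ μ.real A := by
  rw [← measureReal_biUnion_finset
    (hS.pairwiseDisjoint.mono fun _ => Set.inter_subset_left)
    (fun _ _ => measurableSet_Ico.inter hA)
    (fun _ _ => measure_ne_top_of_subset Set.inter_subset_right hfin)]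
  exact measureReal_mono (Set.iUnion₂_subset fun _ _ => Set.inter_subset_right) hfin

lemma Conflict.min_len_le_volume_inter {O J : Ivl} (h : Conflict O J) :
    min O.len J.len ≤ volume.real (O.occ ∩ Set.Ico (J.s - J.len) (J.f + J.len)) := by
  obtain ⟨x, ⟨hOx, hxO⟩, hJx, hxJ⟩ := h
  rw [Ivl.occ, Set.Ico_inter_Ico, Real.volume_real_Ico]
  refine le_max_of_le_left ?_
  simp only [Ivl.len]
  rcases max_cases O.s (J.s - (J.f - J.s)) with hs | hs <;>
  rcases min_cases O.f (J.f + (J.f - J.s)) with hf | hf <;>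
  rcases min_cases (O.f - O.s) (J.f - J.s) with hl | hl <;> linarith

lemma Feasible.sum_min_len_le {S : Finset Ivl} (hS : Feasible S) (J : Ivl) :
    ∑ O ∈ S with Conflict O J, min O.len J.len ≤ 3 * J.len := by
  have hJ := J.len_pos
  calc ∑ O ∈ S with Conflict O J, min O.len J.len
      ≤ ∑ O ∈ S with Conflict O J,
          volume.real (O.occ ∩ Set.Ico (J.s - J.len) (J.f + J.len)) :=
        Finset.sum_le_sum fun O hO => (Finset.mem_filter.1 hO).2.min_len_le_volume_inter
    _ ≤ volume.real (Set.Ico (J.s - J.len) (J.f + J.len)) :=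
        (hS.mono (Finset.filter_subset _ S)).sum_measureReal_inter_le measurableSet_Ico (by simp)
    _ = 3 * J.len := by
        rw [Real.volume_real_Ico_of_le (by linarith [J.lt])]
        simp only [Ivl.len]
        ring

end Packing

lemma min_sum_le_sum_min {ι M : Type*} [AddCommMonoid M] [LinearOrder M] [IsOrderedAddMonoid M]
    {s : Finset ι} {f : ι → M} {x : M} (hx : 0 ≤ x) (hf : ∀ i ∈ s, 0 ≤ f i) :
    min x (∑ i ∈ s, f i) ≤ ∑ i ∈ s, min x (f i) := by
  have hadd : ∀ a b : M, 0 ≤ a → 0 ≤ b → min x (a + b) ≤ min x a + min x b := by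
    intro a b ha hb
    rcases le_total x a with hxa | hax
    · rw [min_eq_left hxa]
      exact (min_le_left _ _).trans (le_add_of_nonneg_right (le_min hx hb))
    rcases le_total x b with hxb | hbx
    · rw [min_eq_left hxb]
      exact (min_le_left _ _).trans (le_add_of_nonneg_left (le_min hx ha))
    · rw [min_eq_right hax, min_eq_right hbx]
      exact min_le_right _ _
  exact Finset.le_sum_of_subadditive_on_pred (min x) (0 ≤ ·) (min_le_right _ _) hadd
    (fun _ _ => add_nonneg) f hf

section Algorithm

/-- The intervals of the current solution `S` that conflict with an arriving interval `I`, denoted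
`I_s` in the description of the algorithm. -/
def conflicts (S : Finset Ivl) (I : Ivl) : Finset Ivl :=
  S.filter fun J => Conflict I J

/-- The intervals of the instance `l` with prediction `1`, which the algorithm is compared with. -/
def predicted (Prd : Ivl → Bool) (l : List Ivl) : Finset Ivl :=
  {I ∈ l.toFinset | Prd I = true}

variable {lam : ℝ} {Prd : Ivl → Bool} {S : Finset Ivl} {I J : Ivl} {l : List Ivl}

@[simp]
lemma mem_conflicts : J ∈ conflicts S I ↔ J ∈ S ∧ Conflict I J :=
  Finset.mem_filter

lemma conflicts_subset (S : Finset Ivl) (I : Ivl) : conflicts S I ⊆ S :=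
  Finset.filter_subset _ S

@[simp]
lemma mem_predicted : I ∈ predicted Prd l ↔ I ∈ l ∧ Prd I = true := by
  simp [predicted]

/-- The condition under which Revoke-Proportional selects the arriving interval `I`, through either
the main rule or the predictions rule. -/
def Accepts (lam : ℝ) (Prd : Ivl → Bool) (S : Finset Ivl) (I : Ivl) : Prop :=
  lam * wsum (conflicts S I) ≤ I.len ∨
    Prd I = true ∧ wsum (conflicts S I) ≤ I.len ∧ ∀ J ∈ conflicts S I, Prd J = false

lemma revokePropStep_of_accepts (h : Accepts lam Prd S I) :
    revokePropStep lam Prd S I = insert I (S \ conflicts S I) := by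
  simp only [revokePropStep]
  split_ifs with hmain hprd
  exacts [rfl, rfl, (h.elim hmain hprd).elim]

lemma revokePropStep_of_not_accepts (h : ¬ Accepts lam Prd S I) :
    revokePropStep lam Prd S I = S := by
  simp only [revokePropStep]
  split_ifs with hmain hprd
  exacts [(h (.inl hmain)).elim, (h (.inr hprd)).elim, rfl]

lemma revokePropStep_subset (lam : ℝ) (Prd : Ivl → Bool) (S : Finset Ivl) (I : Ivl) :
    revokePropStep lam Prd S I ⊆ insert I S := by
  by_cases h : Accepts lam Prd S I
  · rw [revokePropStep_of_accepts h]
    exact Finset.insert_subset_insert I Finset.sdiff_subset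
  · rw [revokePropStep_of_not_accepts h]
    exact Finset.subset_insert I S

lemma revokeProp_concat (lam : ℝ) (Prd : Ivl → Bool) (l : List Ivl) (I : Ivl) :
    revokeProp lam Prd (l ++ [I]) = revokePropStep lam Prd (revokeProp lam Prd l) I := by
  simp [revokeProp]

lemma mem_of_mem_revokeProp : J ∈ revokeProp lam Prd l → J ∈ l := by
  induction l using List.reverseRecOn with
  | nil => simp [revokeProp]
  | append_singleton l I ih =>
    intro hJ
    rw [revokeProp_concat] at hJ
    rcases Finset.mem_insert.1 (revokePropStep_subset lam Prd _ I hJ) with rfl | hJ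
    · simp
    · exact List.mem_append_left [I] (ih hJ)

lemma sum_insert_sdiff_conflicts (S : Finset Ivl) (I : Ivl) (g : Ivl → ℝ) :
    ∑ J ∈ insert I (S \ conflicts S I), g J =
      ∑ J ∈ S, g J - ∑ J ∈ conflicts S I, g J + g I := by
  have hI : I ∉ S \ conflicts S I := by simp [Conflict.refl]
  rw [Finset.sum_insert hI, Finset.sum_sdiff_eq_sub (conflicts_subset S I), add_comm]

end Algorithm

section Potential

/-- The charge on `J` of the intervals of `Q`: each interval `O` of `Q` that conflicts with `J`
charges it `min |O| |J|`. -/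
def charge (Q : Finset Ivl) (J : Ivl) : ℝ :=
  ∑ O ∈ Q with Conflict O J, min O.len J.len

/-- The potential of a selected interval `J`, where `Q` is the set of predicted intervals that have
arrived. -/
def potential (lam : ℝ) (Prd : Ivl → Bool) (Q : Finset Ivl) (J : Ivl) : ℝ :=
  if Prd J = true then 3 * lam / (lam - 1) * J.len else 3 / (lam - 1) * J.len + charge Q J

variable {lam : ℝ} {Prd : Ivl → Bool} {Q S : Finset Ivl} {I J : Ivl} {l : List Ivl}

lemma charge_nonneg (Q : Finset Ivl) (J : Ivl) : 0 ≤ charge Q J :=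
  Finset.sum_nonneg fun O _ => le_min O.len_pos.le J.len_pos.le

lemma charge_insert (hI : I ∉ Q) (J : Ivl) :
    charge (insert I Q) J = charge Q J + if Conflict I J then min I.len J.len else 0 := by
  unfold charge
  rw [Finset.filter_insert]
  split_ifs
  · rw [Finset.sum_insert (by simp [hI]), add_comm]
  · rw [add_zero]

lemma potential_of_predicted (hJ : Prd J = true) :
    potential lam Prd Q J = 3 * lam / (lam - 1) * J.len :=
  if_pos hJ

lemma potential_insert (hI : I ∉ Q) (hJ : Conflict I J → Prd J = false) :
    potential lam Prd (insert I Q) J =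
      potential lam Prd Q J + if Conflict I J then min I.len J.len else 0 := by
  unfold potential
  by_cases hPrd : Prd J = true
  · have hIJ : ¬ Conflict I J := fun h => by simp [hJ h] at hPrd
    simp [hPrd, hIJ]
  · simp only [if_neg hPrd, charge_insert hI, add_assoc]

lemma three_mul_div_sub_one (hlam : 1 < lam) : 3 * lam / (lam - 1) = 3 / (lam - 1) + 3 := by
  have : lam - 1 ≠ 0 := (sub_pos.2 hlam).ne'
  field_simp
  ring

lemma le_potential (hlam : 1 < lam) (Q : Finset Ivl) (J : Ivl) :
    3 / (lam - 1) * J.len ≤ potential lam Prd Q J := by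
  unfold potential
  split_ifs
  · rw [three_mul_div_sub_one hlam]
    linarith [J.len_pos]
  · exact le_add_of_nonneg_right (charge_nonneg Q J)

lemma potential_le (hlam : 1 < lam) (hQ : Feasible Q) (J : Ivl) :
    potential lam Prd Q J ≤ 3 * lam / (lam - 1) * J.len := by
  unfold potential
  split_ifs
  · exact le_rfl
  · have hcharge : charge Q J ≤ 3 * J.len := hQ.sum_min_len_le J
    rw [three_mul_div_sub_one hlam]
    linarith

lemma sum_potential_le (hlam : 1 < lam) (hQ : Feasible Q) (S : Finset Ivl) :
    ∑ J ∈ S, potential lam Prd Q J ≤ 3 * lam / (lam - 1) * wsum S := by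
  rw [wsum, Finset.mul_sum]
  exact Finset.sum_le_sum fun J _ => potential_le hlam hQ J

lemma sum_potential_add_le_of_predictions_rule (hlam : 1 < lam) (hQ : Feasible Q)
    (hI : Prd I = true) (hle : wsum (conflicts S I) ≤ I.len) :
    ∑ J ∈ S, potential lam Prd Q J + (I.len - wsum (conflicts S I)) ≤
      ∑ J ∈ insert I (S \ conflicts S I), potential lam Prd Q J := by
  have hratio : 1 ≤ 3 * lam / (lam - 1) := by
    rw [one_le_div (sub_pos.2 hlam)]
    linarith
  have hrevoked := sum_potential_le (Prd := Prd) hlam hQ (conflicts S I)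
  have hgain := mul_le_mul_of_nonneg_right hratio (sub_nonneg.2 hle)
  rw [sum_insert_sdiff_conflicts, potential_of_predicted hI]
  linarith

lemma sum_potential_le_of_main_rule (hlam : 1 < lam) (hQ : Feasible Q)
    (hle : lam * wsum (conflicts S I) ≤ I.len) :
    ∑ J ∈ S, potential lam Prd Q J ≤
      ∑ J ∈ insert I (S \ conflicts S I), potential lam Prd Q J := by
  have hrevoked : ∑ J ∈ conflicts S I, potential lam Prd Q J ≤ potential lam Prd Q I :=
    calc ∑ J ∈ conflicts S I, potential lam Prd Q J
        ≤ 3 * lam / (lam - 1) * wsum (conflicts S I) := sum_potential_le hlam hQ _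
      _ = 3 / (lam - 1) * (lam * wsum (conflicts S I)) := by ring
      _ ≤ 3 / (lam - 1) * I.len :=
        mul_le_mul_of_nonneg_left hle (div_nonneg zero_le_three (sub_pos.2 hlam).le)
      _ ≤ potential lam Prd Q I := le_potential hlam Q I
  rw [sum_insert_sdiff_conflicts]
  linarith

lemma sum_potential_le_step (hlam : 1 < lam) (hQ : Feasible Q) (S : Finset Ivl) (I : Ivl) :
    ∑ J ∈ S, potential lam Prd Q J ≤
      ∑ J ∈ revokePropStep lam Prd S I, potential lam Prd Q J := by
  by_cases h : Accepts lam Prd S I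
  · rw [revokePropStep_of_accepts h]
    rcases h with hmain | ⟨hI, hle, -⟩
    · exact sum_potential_le_of_main_rule hlam hQ hmain
    · linarith [sum_potential_add_le_of_predictions_rule hlam hQ hI hle]
  · rw [revokePropStep_of_not_accepts h]

lemma sum_potential_add_min_le_sum_potential_insert (hI : I ∉ Q)
    (hconf : ∀ J ∈ conflicts S I, Prd J = false) :
    ∑ J ∈ S, potential lam Prd Q J + min I.len (wsum (conflicts S I)) ≤
      ∑ J ∈ S, potential lam Prd (insert I Q) J := by
  have hcharge : ∑ J ∈ S, potential lam Prd (insert I Q) J =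
      ∑ J ∈ S, potential lam Prd Q J + ∑ J ∈ conflicts S I, min I.len J.len := by
    rw [conflicts, Finset.sum_filter, ← Finset.sum_add_distrib]
    exact Finset.sum_congr rfl fun J hJ =>
      potential_insert hI fun hIJ => hconf J (mem_conflicts.2 ⟨hJ, hIJ⟩)
  rw [hcharge]
  gcongr
  exact min_sum_le_sum_min I.len_pos.le fun J _ => J.len_pos.le

lemma sum_potential_add_len_le_step (hlam : 1 < lam) (hQ : Feasible (insert I Q)) (hIQ : I ∉ Q)
    (hI : Prd I = true) (hconf : ∀ J ∈ conflicts S I, Prd J = false) :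
    ∑ J ∈ S, potential lam Prd Q J + I.len ≤
      ∑ J ∈ revokePropStep lam Prd S I, potential lam Prd (insert I Q) J := by
  have hcharge := sum_potential_add_min_le_sum_potential_insert (lam := lam) hIQ hconf
  rcases le_total (wsum (conflicts S I)) I.len with hle | hle
  · rw [min_eq_right hle] at hcharge
    rw [revokePropStep_of_accepts (.inr ⟨hI, hle, hconf⟩)]
    linarith [sum_potential_add_le_of_predictions_rule hlam hQ hI hle]
  · rw [min_eq_left hle] at hcharge
    exact hcharge.trans (sum_potential_le_step hlam hQ S I)

lemma predicted_concat_of_imp_mem (h : Prd I = true → I ∈ predicted Prd l) :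
    predicted Prd (l ++ [I]) = predicted Prd l := by
  ext J
  simp only [mem_predicted, List.mem_append, List.mem_singleton] at h ⊢
  grind

lemma predicted_concat (hI : Prd I = true) :
    predicted Prd (l ++ [I]) = insert I (predicted Prd l) := by
  ext J
  simp only [mem_predicted, List.mem_append, List.mem_singleton, Finset.mem_insert]
  grind

lemma eq_false_of_mem_conflicts_revokeProp (h : Feasible (insert I (predicted Prd l)))
    (hI : I ∉ predicted Prd l) (hJ : J ∈ conflicts (revokeProp lam Prd l) I) :
    Prd J = false := by
  obtain ⟨hJS, hIJ⟩ := mem_conflicts.1 hJ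
  by_contra hPrd
  have hJQ : J ∈ predicted Prd l :=
    mem_predicted.2 ⟨mem_of_mem_revokeProp hJS, by simpa using hPrd⟩
  exact h I (Finset.mem_insert_self _ _) J (Finset.mem_insert_of_mem hJQ)
    (fun hEq => hI (hEq ▸ hJQ)) hIJ

lemma wsum_predicted_le_sum_potential (hlam : 1 < lam) (h : Feasible (predicted Prd l)) :
    wsum (predicted Prd l) ≤
      ∑ J ∈ revokeProp lam Prd l, potential lam Prd (predicted Prd l) J := by
  induction l using List.reverseRecOn with
  | nil => simp [predicted, wsum, revokeProp]
  | append_singleton l I ih =>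
    rw [revokeProp_concat]
    by_cases hnew : Prd I = true ∧ I ∉ predicted Prd l
    · obtain ⟨hI, hIQ⟩ := hnew
      rw [predicted_concat hI] at h ⊢
      calc wsum (insert I (predicted Prd l)) = wsum (predicted Prd l) + I.len := by
            rw [wsum, Finset.sum_insert hIQ, add_comm, wsum]
        _ ≤ ∑ J ∈ revokeProp lam Prd l, potential lam Prd (predicted Prd l) J + I.len := by
            gcongr
            exact ih (h.mono (Finset.subset_insert _ _))
        _ ≤ _ := sum_potential_add_len_le_step hlam h hIQ hI fun J hJ =>
            eq_false_of_mem_conflicts_revokeProp h hIQ hJ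
    · push Not at hnew
      rw [predicted_concat_of_imp_mem hnew] at h ⊢
      exact (ih h).trans (sum_potential_le_step hlam h _ I)

end Potential

theorem revokeProp_consistent_general (lam : ℝ) (hlam : 1 < lam) (inst : List Ivl)
    (Prd : Ivl → Bool) (hfeas : Feasible (predicted Prd inst)) :
    wsum (predicted Prd inst) ≤ (3 * lam / (lam - 1)) * wsum (revokeProp lam Prd inst) :=
  (wsum_predicted_le_sum_potential hlam hfeas).trans (sum_potential_le hlam hfeas _)

theorem revokeProp_consistent
    (lam : ℝ) (hlam : 1 < lam)
    (inst : List Ivl) (hdist : inst.Nodup) (Prd : Ivl → Bool)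
    (opt : Finset Ivl) (hopt : IsMaxWeightOpt inst opt)
    (hacc : ∀ I ∈ inst, (Prd I = true ↔ I ∈ opt)) :
    wsum opt ≤ (3 * lam / (lam - 1)) * wsum (revokeProp lam Prd inst) := by
  obtain rfl : opt = predicted Prd inst := by
    ext I
    rw [mem_predicted]
    exact ⟨fun hI => ⟨hopt.1 I hI, (hacc I (hopt.1 I hI)).2 hI⟩, fun hI => (hacc I hI.1).1 hI.2⟩
  exact revokeProp_consistent_general lam hlam inst Prd hopt.2.1
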